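/- Let C be a binary completely regular code of length 15 with minimum distance 5 containing the zero vector. Then the set C(5) of weight-5 codewords forms a 2-(15,5,4) design: for every 2-element subset T of the 15 coordinates, there are exactly 4 codewords of weight 5 whose support contains T. In particular |C(5)| = 42. -/

import Mathlib

section
open Set

/-- Distance from a vertex to a code in the binary Hamming space. -/
noncomputable def distToCode {m : ℕ} (C : Set (Fin m → ZMod 2)) (x : Fin m → ZMod 2) : ℕ :=
  sInf {d | ∃ c ∈ C, hammingDist x c = d}

/-- `C` has minimum distance `δ`. -/
def IsMinDist {m : ℕ} (C : Set (Fin m → ZMod 2)) (δ : ℕ) : Prop :=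
  (∀ x ∈ C, ∀ y ∈ C, x ≠ y → δ ≤ hammingDist x y) ∧
  ∃ x ∈ C, ∃ y ∈ C, x ≠ y ∧ hammingDist x y = δ

/-- `C` is completely regular: the number of codewords at distance `k` from `γ`
depends only on `distToCode C γ` and `k`. -/
def IsCompletelyRegular {m : ℕ} (C : Set (Fin m → ZMod 2)) : Prop :=
  ∀ γ γ' : Fin m → ZMod 2, distToCode C γ = distToCode C γ' →
    ∀ k : ℕ, {c ∈ C | hammingDist γ c = k}.ncard = {c ∈ C | hammingDist γ' c = k}.ncard
end

open Finset in
/-- number of codewords (as supports) at distance `k` from `G` -/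
def PP (D : Finset (Finset (Fin 15))) (k : ℕ) (G : Finset (Fin 15)) : ℕ :=
  #{S ∈ D | #(symmDiff G S) = k}

open Finset in
def IsD (D : Finset (Finset (Fin 15))) (G : Finset (Fin 15)) (d : ℕ) : Prop :=
  (∃ S ∈ D, #(symmDiff G S) = d) ∧ ∀ S ∈ D, d ≤ #(symmDiff G S)

open Finset in
/-- number of codewords of weight `k` containing `G` -/
def dg (D : Finset (Finset (Fin 15))) (k : ℕ) (G : Finset (Fin 15)) : ℕ :=
  #{S ∈ D | #S = k ∧ G ⊆ S}

section
open Finset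

lemma card_sd (G S : Finset (Fin 15)) : #(symmDiff G S) + 2 * #(G ∩ S) = #G + #S := by
  have h1 : #(symmDiff G S) = #(G \ S) + #(S \ G) := by
    rw [symmDiff_def]
    exact card_union_of_disjoint disjoint_sdiff_sdiff
  have h2 := card_sdiff_add_card_inter G S
  have h3 := card_sdiff_add_card_inter S G
  rw [inter_comm S G] at h3
  omega

lemma sub_iff (G S : Finset (Fin 15)) : G ⊆ S ↔ #(G ∩ S) = #G := by
  constructor
  · intro h; rw [inter_eq_left.2 h]
  · intro h
    have := eq_of_subset_of_card_le (inter_subset_left (s₁ := G) (s₂ := S)) h.ge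
    exact inter_eq_left.1 this

lemma dcount (F : Finset (Finset (Fin 15))) (U : Finset (Fin 15)) (j : ℕ) :
    ∑ G ∈ powersetCard j U, #{S ∈ F | G ⊆ S} = ∑ S ∈ F, (#(U ∩ S)).choose j := by
  simp only [card_filter]
  rw [sum_comm]
  refine sum_congr rfl fun S _ => ?_
  rw [← card_filter, ← card_powersetCard]
  congr 1
  ext G
  simp only [mem_filter, mem_powersetCard, subset_inter_iff]
  tauto

lemma dg_sum (D : Finset (Finset (Fin 15))) (k j : ℕ) :
    ∑ G ∈ powersetCard j (univ : Finset (Fin 15)), dg D k G = #{S ∈ D | #S = k} * k.choose j := by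
  have := dcount {S ∈ D | #S = k} univ j
  simp only [filter_filter] at this
  unfold dg
  rw [this, sum_congr rfl (g := fun _ => k.choose j), sum_const, smul_eq_mul]
  intro S hS
  simp only [mem_filter] at hS
  simp [hS.2]

lemma packing (D : Finset (Finset (Fin 15))) (g : Finset (Fin 15) → Finset (Fin 15))
    (U : Finset (Fin 15)) (j : ℕ) (hU : ∀ S ∈ D, g S ⊆ U)
    (h : ∀ S ∈ D, ∀ T ∈ D, S ≠ T → #(g S ∩ g T) < j) :
    ∑ S ∈ D, (#(g S)).choose j ≤ (#U).choose j := by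
  simp only [← card_powersetCard]
  rw [← card_biUnion]
  · refine card_le_card ?_
    intro X hX
    simp only [mem_biUnion, mem_powersetCard] at hX ⊢
    obtain ⟨S, hS, h1, h2⟩ := hX
    exact ⟨h1.trans (hU S hS), h2⟩
  · intro S hS T hT hne
    rw [Function.onFun, disjoint_left]
    intro X h1 h2
    rw [mem_powersetCard] at h1 h2
    have := card_le_card (subset_inter h1.1 h2.1)
    have := h S hS T hT hne
    omega

lemma sd_inter {D : Finset (Finset (Fin 15))}
    (hmin : ∀ S ∈ D, ∀ T ∈ D, S ≠ T → 5 ≤ #(symmDiff S T)) (G S T : Finset (Fin 15))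
    (hS : S ∈ D) (hT : T ∈ D) (hne : S ≠ T) :
    2 * #(symmDiff G S ∩ symmDiff G T) + 5 ≤ #(symmDiff G S) + #(symmDiff G T) := by
  have h := card_sd (symmDiff G S) (symmDiff G T)
  have e : symmDiff (symmDiff G S) (symmDiff G T) = symmDiff S T := by
    rw [symmDiff_comm G S, symmDiff_assoc, symmDiff_symmDiff_cancel_left]
  rw [e] at h
  have := hmin S hS T hT hne
  omega

lemma PP3_le {D : Finset (Finset (Fin 15))}
    (hmin : ∀ S ∈ D, ∀ T ∈ D, S ≠ T → 5 ≤ #(symmDiff S T)) (G : Finset (Fin 15)) :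
    3 * PP D 3 G ≤ 15 := by
  have := packing {S ∈ D | #(symmDiff G S) = 3} (fun S => symmDiff G S) univ 1
    (fun _ _ => subset_univ _) (by
      intro S hS T hT hne
      simp only [mem_filter] at hS hT
      have := sd_inter hmin G S T hS.1 hT.1 hne
      omega)
  rw [sum_congr rfl (g := fun _ => 3)] at this
  · simp at this; unfold PP; omega
  · intro S hS
    simp only [mem_filter] at hS
    simp [hS.2]

theorem core (D : Finset (Finset (Fin 15))) (h0 : ∅ ∈ D)
    (hmin : ∀ S ∈ D, ∀ T ∈ D, S ≠ T → 5 ≤ #(symmDiff S T))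
    (hex : ∃ S ∈ D, #S = 5)
    (hreg : ∀ G G' d, IsD D G d → IsD D G' d → ∀ k, PP D k G = PP D k G') :
    (∀ T : Finset (Fin 15), #T = 2 → dg D 5 T = 4) ∧ #{S ∈ D | #S = 5} = 42 := by
  have hwt : ∀ S ∈ D, S = ∅ ∨ 5 ≤ #S := by
    intro S hS
    by_cases h : S = ∅
    · exact Or.inl h
    · right
      have := hmin S hS ∅ h0 h
      have h2 := card_sd S ∅
      simp only [inter_empty, card_empty] at h2
      omega
  have hwt' : ∀ S ∈ D, #S = 0 ∨ 5 ≤ #S := by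
    intro S hS
    rcases hwt S hS with h | h
    · left; simp [h]
    · right; exact h
  have hle : ∀ G S : Finset (Fin 15), #(G ∩ S) ≤ #G ∧ #(G ∩ S) ≤ #S := fun G S =>
    ⟨card_le_card inter_subset_left, card_le_card inter_subset_right⟩
  have small : ∀ G : Finset (Fin 15), #G ≤ 2 → IsD D G (#G) := by
    intro G hG
    refine ⟨⟨∅, h0, by have := card_sd G ∅; simp only [inter_empty, card_empty] at this; omega⟩, ?_⟩
    intro S hS
    have := card_sd G S
    have := hle G S
    have := hwt' S hS
    omega
  have cov : ∀ G : Finset (Fin 15), #G = 3 → dg D 5 G ≠ 0 → IsD D G 2 := by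
    intro G hG hc
    obtain ⟨S, hS⟩ := card_ne_zero.1 hc
    simp only [mem_filter] at hS
    refine ⟨⟨S, hS.1, ?_⟩, ?_⟩
    · have := card_sd G S
      have := (sub_iff G S).1 hS.2.2
      omega
    intro S hS
    have := card_sd G S
    have := hle G S
    have := hwt' S hS
    omega
  have uncov : ∀ G : Finset (Fin 15), #G = 3 → dg D 5 G = 0 → IsD D G 3 := by
    intro G hG hc
    refine ⟨⟨∅, h0, by have := card_sd G ∅; simp only [inter_empty, card_empty] at this; omega⟩, ?_⟩
    intro S hS
    have h1 := card_sd G S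
    have h2 := hle G S
    have h3 := hwt' S hS
    by_contra h4
    have h5 : #S = 5 ∧ G ⊆ S := by
      rw [sub_iff]; omega
    have : S ∈ ({S ∈ D | #S = 5 ∧ G ⊆ S} : Finset _) := by simp [hS, h5]
    rw [card_eq_zero.1 hc] at this
    simp at this
  -- existence of a 2-set
  have pair : ∀ T T' : Finset (Fin 15), #T = 2 → #T' = 2 → ∀ k, PP D k T = PP D k T' := by
    intro T T' h h' k
    exact hreg T T' 2 (h ▸ small T (by omega)) (h' ▸ small T' (by omega)) k
  have P3T : ∀ T : Finset (Fin 15), #T = 2 → PP D 3 T = dg D 5 T := by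
    intro T hT
    unfold PP dg
    congr 1
    refine filter_congr fun S hS => ?_
    have := card_sd T S
    have := hle T S
    have := hwt' S hS
    rw [sub_iff]
    omega
  have P4T : ∀ T : Finset (Fin 15), #T = 2 → PP D 4 T = dg D 6 T := by
    intro T hT
    unfold PP dg
    congr 1
    refine filter_congr fun S hS => ?_
    have := card_sd T S
    have := hle T S
    have := hwt' S hS
    rw [sub_iff]
    omega
  have P3G : ∀ G : Finset (Fin 15), #G = 3 → PP D 3 G = 1 + dg D 6 G := by
    intro G hG
    unfold PP dg
    have : (1:ℕ) = #({S ∈ D | S = ∅} : Finset _) := by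
      rw [filter_eq' D ∅]; simp [h0]
    rw [this, ← card_union_of_disjoint, ← filter_or]
    · congr 1
      refine filter_congr fun S hS => ?_
      have := card_sd G S
      have := hle G S
      have := hwt' S hS
      rw [sub_iff, ← card_eq_zero]
      omega
    · rw [disjoint_filter]
      rintro S _ rfl
      simp
  have P4G : ∀ G : Finset (Fin 15), #G = 3 →
      PP D 4 G = #{S ∈ D | #S = 5 ∧ #(G ∩ S) = 2} + dg D 7 G := by
    intro G hG
    unfold PP dg
    rw [← card_union_of_disjoint, ← filter_or]
    · congr 1
      refine filter_congr fun S hS => ?_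
      have := card_sd G S
      have := hle G S
      have := hwt' S hS
      rw [sub_iff]
      omega
    · rw [disjoint_filter]
      intro S _ h
      omega
  have P4x : ∀ G : Finset (Fin 15), #G = 1 → PP D 4 G = dg D 5 G := by
    intro T hT
    unfold PP dg
    congr 1
    refine filter_congr fun S hS => ?_
    have := card_sd T S
    have := hle T S
    have := hwt' S hS
    rw [sub_iff]
    omega
  have P6x : ∀ G : Finset (Fin 15), #G = 1 →
      PP D 6 G + dg D 5 G = #{S ∈ D | #S = 5} + dg D 7 G := by
    intro G hG
    unfold PP dg
    rw [← card_union_of_disjoint, ← card_union_of_disjoint, ← filter_or, ← filter_or]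
    · congr 1
      refine filter_congr fun S hS => ?_
      have := card_sd G S
      have := hle G S
      have := hwt' S hS
      simp only [sub_iff]
      omega
    · rw [disjoint_filter]
      intro S _ h
      omega
    · rw [disjoint_filter]
      intro S _ h
      have := card_sd G S
      rw [sub_iff]
      omega
  -- lambda
  obtain ⟨lam, hlam⟩ : ∃ l, ∀ T : Finset (Fin 15), #T = 2 → dg D 5 T = l :=
    ⟨dg D 5 {0, 1}, fun T hT => by
      rw [← P3T T hT, ← P3T {0, 1} rfl]; exact pair T _ hT rfl 3⟩
  obtain ⟨mu, hmu⟩ : ∃ l, ∀ T : Finset (Fin 15), #T = 2 → dg D 6 T = l :=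
    ⟨dg D 6 {0, 1}, fun T hT => by
      rw [← P4T T hT, ← P4T {0, 1} rfl]; exact pair T _ hT rfl 4⟩
  obtain ⟨r, hr⟩ : ∃ l, ∀ T : Finset (Fin 15), #T = 1 → dg D 5 T = l :=
    ⟨dg D 5 {0}, fun T hT => by
      rw [← P4x T hT, ← P4x {0} rfl]
      exact hreg T {0} 1 (hT ▸ small T (by omega)) (small {0} (by simp)) 4⟩
  obtain ⟨r7, hr7⟩ : ∃ l, ∀ T : Finset (Fin 15), #T = 1 → dg D 7 T = l :=
    ⟨dg D 7 {0}, fun T hT => by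
      have h1 := P6x T hT
      have h2 := P6x {0} rfl
      have h3 := hreg T {0} 1 (hT ▸ small T (by omega)) (small {0} (by simp)) 6
      have h4 := hr T hT
      have h5 := hr {0} rfl
      omega⟩
  have const : ∀ (k j l : ℕ), (∀ T : Finset (Fin 15), #T = j → dg D k T = l) →
      Nat.choose 15 j * l = #{S ∈ D | #S = k} * k.choose j := by
    intro k j l h
    rw [← dg_sum, sum_congr rfl (g := fun _ => l), sum_const, card_powersetCard]
    · simp
    · intro T hT
      exact h T (mem_powersetCard.1 hT).2
  have e1 := const 5 2 lam hlam
  have e2 := const 6 2 mu hmu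
  have e4 := const 7 1 r7 hr7
  simp only [show Nat.choose 15 2 = 105 from rfl, show Nat.choose 15 1 = 15 from rfl,
    show Nat.choose 5 2 = 10 from rfl, show Nat.choose 6 2 = 15 from rfl,
    show Nat.choose 7 1 = 7 from rfl] at e1 e2 e4
  have A5pos : 0 < #{S ∈ D | #S = 5} := by
    obtain ⟨S, hS, h⟩ := hex
    exact card_pos.2 ⟨S, by simp [hS, h]⟩
  have lamle : 3 * lam ≤ 15 := by
    have := PP3_le hmin {0, 1}
    rw [P3T {0, 1} rfl, hlam {0, 1} rfl] at this
    exact this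
  have key : lam ≠ 2 := by
    intro hl
    subst hl
    have A5 : #{S ∈ D | #S = 5} = 21 := by omega
    -- every triple is in at most one block
    have le1 : ∀ G : Finset (Fin 15), #G = 3 → dg D 5 G ≤ 1 := by
      intro G hG
      refine card_le_one.2 ?_
      intro S hS T hT
      simp only [mem_filter] at hS hT
      by_contra hne
      have h1 := sd_inter hmin G S T hS.1 hT.1 hne
      have h2 := card_sd G S
      have h3 := card_sd G T
      have h4 := (sub_iff G S).1 hS.2.2
      have h5 := (sub_iff G T).1 hT.2.2
      omega
    have N2 : ∀ G : Finset (Fin 15), #G = 3 →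
        #{S ∈ D | #S = 5 ∧ #(G ∩ S) = 2} + 3 * dg D 5 G = 6 := by
      intro G hG
      have h := dcount {S ∈ D | #S = 5} G 2
      simp only [filter_filter] at h
      change ∑ T ∈ powersetCard 2 G, dg D 5 T = _ at h
      rw [sum_congr rfl (g := fun _ => 2)
        (fun T hT => hlam T (mem_powersetCard.1 hT).2), sum_const, card_powersetCard, hG] at h
      have h2 : ∀ S ∈ ({S ∈ D | #S = 5} : Finset _), (#(G ∩ S)).choose 2 =
          (if #(G ∩ S) = 2 then 1 else 0) + 3 * (if G ⊆ S then 1 else 0) := by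
        intro S _
        have := (hle G S).1
        simp only [sub_iff]
        rw [hG] at this ⊢
        interval_cases #(G ∩ S) <;> decide
      rw [sum_congr rfl h2, sum_add_distrib, ← mul_sum, ← card_filter, ← card_filter,
        filter_filter, filter_filter] at h
      unfold dg
      rw [← h]; rfl
    have c6 : ∀ G : Finset (Fin 15), #G = 3 → dg D 5 G ≠ 0 → dg D 6 G = 1 := by
      intro G hG hc
      have h1 := hreg G {0, 1} 2 (cov G hG hc) (small {0, 1} (by simp)) 3
      rw [P3G G hG, P3T {0, 1} rfl, hlam _ rfl] at h1
      omega
    have c7 : ∀ G : Finset (Fin 15), #G = 3 → dg D 5 G ≠ 0 → dg D 7 G + 3 = mu := by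
      intro G hG hc
      have h1 := hreg G {0, 1} 2 (cov G hG hc) (small {0, 1} (by simp)) 4
      rw [P4G G hG, P4T {0, 1} rfl, hmu _ rfl] at h1
      have := N2 G hG
      have := le1 G hG
      omega
    have d53 := dg_sum D 5 3
    rw [A5, show Nat.choose 5 3 = 10 from rfl] at d53
    have ncov : #{G ∈ powersetCard 3 (univ : Finset (Fin 15)) | dg D 5 G ≠ 0} = 210 := by
      rw [card_filter, show 210 = 21 * 10 from rfl, ← d53]
      refine sum_congr rfl fun G hG => ?_
      have := le1 G (mem_powersetCard.1 hG).2
      split_ifs with h <;> omega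
    have nunc : #{G ∈ powersetCard 3 (univ : Finset (Fin 15)) | ¬ dg D 5 G ≠ 0} = 245 := by
      have := card_filter_add_card_filter_not (s := powersetCard 3 (univ : Finset (Fin 15)))
        (fun G => dg D 5 G ≠ 0)
      rw [card_powersetCard, card_univ, Fintype.card_fin, show Nat.choose 15 3 = 455 from rfl,
        ncov] at this
      omega
    obtain ⟨G0, hG0⟩ : ∃ G, G ∈ ({G ∈ powersetCard 3 (univ : Finset (Fin 15)) |
        ¬ dg D 5 G ≠ 0} : Finset _) := card_pos.1 (by rw [nunc]; norm_num)
    rw [mem_filter, mem_powersetCard, not_not] at hG0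
    obtain ⟨⟨-, hG3⟩, hG0⟩ := hG0
    have u6 : ∀ G : Finset (Fin 15), #G = 3 → dg D 5 G = 0 → dg D 6 G = dg D 6 G0 := by
      intro G hG hc
      have h1 := hreg G G0 3 (uncov G hG hc) (uncov G0 hG3 hG0) 3
      rw [P3G G hG, P3G G0 hG3] at h1
      omega
    have u7 : ∀ G : Finset (Fin 15), #G = 3 → dg D 5 G = 0 → dg D 7 G = dg D 7 G0 := by
      intro G hG hc
      have h1 := hreg G G0 3 (uncov G hG hc) (uncov G0 hG3 hG0) 4
      rw [P4G G hG, P4G G0 hG3] at h1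
      have := N2 G hG
      have := N2 G0 hG3
      omega
    have split : ∀ k a b : ℕ, (∀ G : Finset (Fin 15), #G = 3 → dg D 5 G ≠ 0 → dg D k G = a) →
        (∀ G : Finset (Fin 15), #G = 3 → dg D 5 G = 0 → dg D k G = b) →
        210 * a + 245 * b = #{S ∈ D | #S = k} * k.choose 3 := by
      intro k a b ha hb
      rw [← dg_sum, ← sum_filter_add_sum_filter_not _ (fun G => dg D 5 G ≠ 0),
        sum_congr rfl (g := fun _ => a), sum_const, ncov,
        sum_congr rfl (g := fun _ => b), sum_const, nunc]
      · simp
      · intro G hG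
        rw [mem_filter, mem_powersetCard, not_not] at hG
        exact hb G hG.1.2 hG.2
      · intro G hG
        rw [mem_filter, mem_powersetCard] at hG
        exact ha G hG.1.2 hG.2
    have s6 := split 6 1 _ c6 u6
    have s7 := split 7 (mu - 3) _ (fun G h h' => by have := c7 G h h'; omega) u7
    rw [show Nat.choose 6 3 = 20 from rfl] at s6
    rw [show Nat.choose 7 3 = 35 from rfl] at s7
    have sle := PP3_le hmin G0
    rw [P3G G0 hG3] at sle
    have tle : 18 + 6 * dg D 7 G0 ≤ 66 := by
      have hp := packing {S ∈ D | #(symmDiff G0 S) = 4} (fun S => S \ G0) G0ᶜ 2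
        (by intro S _ x hx; simp at hx ⊢; exact hx.2) (by
          intro S hS T hT hne
          simp only [mem_filter] at hS hT
          have h1 := sd_inter hmin G0 S T hS.1 hT.1 hne
          have h2 : #((S \ G0) ∩ (T \ G0)) ≤ #(symmDiff G0 S ∩ symmDiff G0 T) := by
            refine card_le_card (inter_subset_inter ?_ ?_) <;>
            · intro x hx
              rw [mem_symmDiff]; right; simpa using hx
          omega)
      rw [card_compl, hG3, Fintype.card_fin, show Nat.choose (15 - 3) 2 = 66 from rfl] at hp
      have h2 : ∀ S ∈ ({S ∈ D | #(symmDiff G0 S) = 4} : Finset _), (#(S \ G0)).choose 2 =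
          3 * (if #S = 5 ∧ #(G0 ∩ S) = 2 then 1 else 0) +
          6 * (if #S = 7 ∧ G0 ⊆ S then 1 else 0) := by
        intro S hS
        simp only [mem_filter] at hS
        have h1 := card_sd G0 S
        have h2 := hle G0 S
        have h3 := hwt' S hS.1
        have h4 := card_sdiff_add_card_inter S G0
        rw [inter_comm] at h4
        simp only [sub_iff]
        have : (#S = 5 ∧ #(G0 ∩ S) = 2 ∧ #(S \ G0) = 3) ∨
          (#S = 7 ∧ #(G0 ∩ S) = 3 ∧ #(S \ G0) = 4) := by omega
        rcases this with ⟨a, b, c⟩ | ⟨a, b, c⟩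
        · rw [a, b, c]; simp [Nat.choose]
        · rw [a, b, c, hG3]; simp [Nat.choose]
      rw [sum_congr rfl h2, sum_add_distrib, ← mul_sum, ← mul_sum, ← card_filter, ← card_filter,
        filter_filter, filter_filter] at hp
      have e5 : ({S ∈ D | #(symmDiff G0 S) = 4 ∧ #S = 5 ∧ #(G0 ∩ S) = 2} : Finset _) =
          {S ∈ D | #S = 5 ∧ #(G0 ∩ S) = 2} := by
        refine filter_congr fun S hS => ?_
        have h1 := card_sd G0 S
        omega
      have e7 : ({S ∈ D | #(symmDiff G0 S) = 4 ∧ #S = 7 ∧ G0 ⊆ S} : Finset _) =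
          {S ∈ D | #S = 7 ∧ G0 ⊆ S} := by
        refine filter_congr fun S hS => ?_
        have h1 := card_sd G0 S
        rw [sub_iff]
        omega
      rw [e5, e7] at hp
      have := N2 G0 hG3
      unfold dg at *
      omega
    omega
  have : lam = 4 := by omega
  subst this
  exact ⟨hlam, by omega⟩

end

lemma zmod2_ne (a b : ZMod 2) : a ≠ b ↔ (a ≠ 0 ∧ ¬ b ≠ 0 ∨ b ≠ 0 ∧ ¬ a ≠ 0) := by
  revert a b; decide

def supp15 (x : Fin 15 → ZMod 2) : Finset (Fin 15) := Finset.univ.filter (fun i => x i ≠ 0)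

lemma supp15_dist (x y : Fin 15 → ZMod 2) :
    (symmDiff (supp15 x) (supp15 y)).card = hammingDist x y := by
  unfold hammingDist
  congr 1
  ext i
  simp only [Finset.mem_symmDiff, supp15, Finset.mem_filter, Finset.mem_univ, true_and]
  exact (zmod2_ne (x i) (y i)).symm

lemma supp15_inj : Function.Injective supp15 := by
  intro x y h
  have := supp15_dist x y
  rw [h, symmDiff_self] at this
  exact hammingDist_eq_zero.1 (by simpa using this.symm)

lemma supp15_surj (S : Finset (Fin 15)) : ∃ x, supp15 x = S :=
  ⟨fun i => if i ∈ S then 1 else 0, by ext i; simp [supp15]⟩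

theorem stmt_15 (C : Set (Fin 15 → ZMod 2)) (h0 : (0 : Fin 15 → ZMod 2) ∈ C)
    (hreg : IsCompletelyRegular C) (hd : IsMinDist C 5) :
    (∀ T : Finset (Fin 15), T.card = 2 →
      {β ∈ C | hammingNorm β = 5 ∧ ∀ i ∈ T, β i ≠ 0}.ncard = 4) ∧
    {β ∈ C | hammingNorm β = 5}.ncard = 42 := by
  classical
  set D : Finset (Finset (Fin 15)) := Finset.univ.filter (fun S => ∃ x ∈ C, supp15 x = S) with hD
  have memD : ∀ x, supp15 x ∈ D ↔ x ∈ C := by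
    intro x
    simp only [hD, Finset.mem_filter, Finset.mem_univ, true_and]
    constructor
    · rintro ⟨y, hy, h⟩; exact supp15_inj h ▸ hy
    · intro h; exact ⟨x, h, rfl⟩
  have cnt : ∀ (p : (Fin 15 → ZMod 2) → Prop) (q : Finset (Fin 15) → Prop) [DecidablePred q],
      (∀ x, p x ↔ q (supp15 x)) → {c ∈ C | p c}.ncard = (D.filter q).card := by
    intro p q _ h
    rw [← Set.ncard_image_of_injective _ supp15_inj, ← Set.ncard_coe_finset]
    congr 1
    ext S
    obtain ⟨x, rfl⟩ := supp15_surj S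
    simp only [Finset.coe_filter, Set.mem_ofPred_eq, memD, ← h]
    constructor
    · rintro ⟨y, hy, e⟩
      exact supp15_inj e ▸ hy
    · intro hx; exact ⟨x, hx, rfl⟩
  have norm : ∀ x, hammingNorm x = (supp15 x).card := fun x => rfl
  have zero : supp15 0 = ∅ := by ext i; simp [supp15]
  have dist : ∀ x d, IsD D (supp15 x) d → distToCode C x = d := by
    rintro x d ⟨⟨S, hS, h1⟩, h2⟩
    obtain ⟨y, rfl⟩ := supp15_surj S
    rw [supp15_dist] at h1
    rw [memD] at hS
    unfold distToCode
    apply le_antisymm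
    · exact Nat.sInf_le ⟨y, hS, h1⟩
    · refine le_csInf (Set.nonempty_of_mem (x := d) ⟨y, hS, h1⟩) ?_
      rintro e ⟨z, hz, rfl⟩
      have := h2 _ ((memD z).2 hz)
      rwa [supp15_dist] at this
  have hPP : ∀ x k, {c ∈ C | hammingDist x c = k}.ncard = PP D k (supp15 x) := by
    intro x k
    exact cnt (fun c => hammingDist x c = k) (fun S => (symmDiff (supp15 x) S).card = k)
      (fun y => by simp only [supp15_dist])
  have hc := core D (by rw [← zero, memD]; exact h0)
    (by
      intro S hS T hT hne
      obtain ⟨x, rfl⟩ := supp15_surj S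
      obtain ⟨y, rfl⟩ := supp15_surj T
      rw [memD] at hS hT
      rw [supp15_dist]
      exact hd.1 x hS y hT (fun h => hne (h ▸ rfl)))
    (by
      obtain ⟨x, hx, y, hy, -, h⟩ := hd.2
      have z : ∀ x ∈ C, distToCode C x = 0 := fun x hx =>
        Nat.sInf_eq_zero.2 (Or.inl ⟨x, hx, hammingDist_self x⟩)
      have h1 := hreg x 0 ((z x hx).trans (z 0 h0).symm) 5
      have h2 : 0 < {c ∈ C | hammingDist x c = 5}.ncard :=
        (Set.ncard_pos (Set.toFinite _)).2 ⟨y, hy, h⟩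
      rw [h1] at h2
      obtain ⟨w, hw, h3⟩ := (Set.ncard_pos (Set.toFinite _)).1 h2
      refine ⟨supp15 w, (memD w).2 hw, ?_⟩
      rw [← norm, ← hammingDist_zero_left]; exact h3)
    (by
      intro G G' d h h' k
      obtain ⟨x, rfl⟩ := supp15_surj G
      obtain ⟨y, rfl⟩ := supp15_surj G'
      rw [← hPP, ← hPP]
      exact hreg x y ((dist x d h).trans (dist y d h').symm) k)
  refine ⟨fun T hT => ?_, ?_⟩
  · rw [← hc.1 T hT]
    refine cnt (fun β => hammingNorm β = 5 ∧ ∀ i ∈ T, β i ≠ 0) (fun S => S.card = 5 ∧ T ⊆ S)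
      (fun x => ?_)
    simp only [norm]
    refine and_congr_right fun _ => ?_
    simp [supp15, Finset.subset_iff]
  · rw [← hc.2]
    exact cnt (fun β => hammingNorm β = 5) (fun S => S.card = 5) (fun x => by simp only [norm])
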